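/- Let R be a commutative Noetherian ring, p ∈ Spec R, E an injective R-module, and M an R-module. Then for all i ≥ 0, the k(p)-vector space Tor_i^{R_p}(k(p), Hom_R(R_p, Hom_R(M,E))) is isomorphic to the direct product Hom_R(k(p), E)^{μ_i(p,M)} of copies of Hom_R(k(p), E) indexed by a set of cardinality μ_i(p,M); in particular its k(p)-dimension equals dim_{k(p)} Hom_R(k(p),E)^{μ_i(p,M)}. -/

import Mathlib

universe u

variable (R : Type u) [CommRing R]

/-- A morphism `f : F → M` with `F` flat is a flat precover if every morphism from a
flat module to `M` factors through `f`. -/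
def IsFlatPrecover {F M : Type u} [AddCommGroup F] [AddCommGroup M] [Module R F]
    [Module R M] (f : F →ₗ[R] M) : Prop :=
  Module.Flat R F ∧
    ∀ (F' : Type u) [AddCommGroup F'] [Module R F'], Module.Flat R F' →
      ∀ g : F' →ₗ[R] M, ∃ h : F' →ₗ[R] F, f ∘ₗ h = g

/-- A flat precover `f : F → M` is a flat cover if every `h : F → F` with `f ∘ h = f`
is an automorphism. -/
def IsFlatCover {F M : Type u} [AddCommGroup F] [AddCommGroup M] [Module R F]
    [Module R M] (f : F →ₗ[R] M) : Prop :=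
  IsFlatPrecover R f ∧ ∀ h : F →ₗ[R] F, f ∘ₗ h = f → Function.Bijective h

/-- A morphism `i : M → E` is an injective envelope if `E` is injective, `i` is
injective, and the image of `i` is an essential submodule of `E`. -/
def IsInjectiveEnvelope {M E : Type u} [AddCommGroup M] [AddCommGroup E] [Module R M]
    [Module R E] (i : M →ₗ[R] E) : Prop :=
  Module.Injective R E ∧ Function.Injective i ∧
    ∀ N : Submodule R E, N ≠ ⊥ → N ⊓ LinearMap.range i ≠ ⊥

/-- An injective cogenerator is an injective module `E` such that `Hom(N, E) ≠ 0`
for every nonzero module `N`. -/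
def IsInjectiveCogenerator (E : Type u) [AddCommGroup E] [Module R E] : Prop :=
  Module.Injective R E ∧
    ∀ (N : Type u) [AddCommGroup N] [Module R N], (∃ x : N, x ≠ 0) →
      ∃ g : N →ₗ[R] E, g ≠ 0

open CategoryTheory

/-- The `A`-module structure on `Hom_R(X, M)` for an `R`-algebra `A` and an `A`-module
`X`, given by `(a • f) x = f (a • x)`. -/
noncomputable instance (priority := 50) LinearMap.domSMulModule (A : Type u) [CommRing A] [Algebra R A]
    (X : Type u) [AddCommGroup X] [Module R X] [Module A X] [IsScalarTower R A X]
    (M : Type u) [AddCommGroup M] [Module R M] : Module A (X →ₗ[R] M) where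
  smul a f := f ∘ₗ (a • (LinearMap.id : X →ₗ[R] X))
  one_smul f := LinearMap.ext fun x => by
    show f ((1 : A) • x) = f x
    rw [one_smul]
  mul_smul a b f := LinearMap.ext fun x => by
    show f ((a * b) • x) = f (b • a • x)
    rw [mul_comm, mul_smul]
  smul_zero a := rfl
  smul_add a f g := rfl
  add_smul a b f := LinearMap.ext fun x => by
    show f ((a + b) • x) = f (a • x) + f (b • x)
    rw [add_smul, map_add]
  zero_smul f := LinearMap.ext fun x => by
    show f ((0 : A) • x) = 0
    rw [zero_smul, map_zero]

attribute [local instance] RestrictScalars.moduleOrig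



section partE
open Limits

theorem aux_homology_equiv {A : Type u} [CommRing A] (S : ShortComplex (ModuleCat.{u} A))
    (T : Type u) [AddCommGroup T] [Module A T] (ψ : LinearMap.ker S.g.hom →ₗ[A] T)
    (hs : Function.Surjective ψ) (hk : ∀ x, ψ x = 0 ↔ ∃ y, S.f.hom y = x.1) :
    Nonempty (S.homology ≃ₗ[A] T) := by
  have e1 := S.moduleCatHomologyIso.toLinearEquiv
  refine ⟨e1.trans ((Submodule.quotEquivOfEq _ _ ?_).trans (ψ.quotKerEquivOfSurjective hs))⟩
  ext x
  rw [LinearMap.mem_ker, hk x]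
  constructor
  · rintro ⟨y, rfl⟩
    exact ⟨y, rfl⟩
  · rintro ⟨y, hy⟩
    exact ⟨y, Subtype.ext hy⟩

theorem aux_extMk_eq_zero_zero {C : Type*} [Category C] [Abelian C] [HasExt.{u} C] {X Y : C}
    (P : ProjectiveResolution X)
    (f : P.complex.X 0 ⟶ Y) (m : ℕ) (hm : 0 + 1 = m) (hf : P.complex.d m 0 ≫ f = 0)
    (h : P.extMk f m hm hf = 0) : f = 0 := by
  rw [← P.extEquivCohomologyClass.apply_eq_iff_eq,
    ProjectiveResolution.extEquivCohomologyClass_extMk,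
    ProjectiveResolution.extEquivCohomologyClass_zero,
    CochainComplex.HomComplex.CohomologyClass.mk_eq_zero_iff,
    CochainComplex.HomComplex.Cocycle.toSingleMk_mem_coboundaries_iff _ _ _ _ _ 1 (by simp)] at h
  obtain ⟨g, hg⟩ := h
  have hz : IsZero (P.cochainComplex.X 1) :=
    P.cochainComplex.isZero_of_isStrictlyLE 0 1 (by simp)
  rw [hz.eq_of_src g 0, comp_zero] at hg
  rw [← cancel_epi (P.cochainComplexXIso (-((0 : ℕ) : ℤ)) 0 rfl).hom, ← hg, comp_zero]

theorem aux_ext_equiv {A : Type u} [CommRing A] (K X : ModuleCat.{u} A) (n : ℕ) :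
    Nonempty ((((Ext A (ModuleCat.{u} A) n).obj (Opposite.op K)).obj X) ≃ₗ[A]
      Abelian.Ext.{u} K X n) := by
  let P := projectiveResolution K
  have e1 := (P.isoExt (R := A) n X).toLinearEquiv
  have e2 := ((P.complex.linearYonedaObj A X).homologyIsoSc' ((ComplexShape.up ℕ).prev n) n (n+1)
    rfl (by simp)).toLinearEquiv
  let S := (P.complex.linearYonedaObj A X).sc' ((ComplexShape.up ℕ).prev n) n (n+1)
  have hZ : ∀ x : LinearMap.ker S.g.hom, P.complex.d (n+1) n ≫ (show P.complex.X n ⟶ X from x.1) = 0 :=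
    fun x => x.2
  let ψ : LinearMap.ker S.g.hom →ₗ[A] Abelian.Ext.{u} K X n :=
    { toFun := fun x => P.extMk (show P.complex.X n ⟶ X from x.1) (n+1) rfl (hZ x)
      map_add' := fun x y => (P.add_extMk _ _ _ _ _ _).symm
      map_smul' := fun a x => by
        rw [RingHom.id_apply, Abelian.Ext.smul_eq_comp_mk₀, P.extMk_comp_mk₀]
        congr 1 }
  obtain ⟨e3⟩ := aux_homology_equiv S (Abelian.Ext.{u} K X n) ψ (by
    intro α
    obtain ⟨f, hf, rfl⟩ := P.extMk_surjective α (n+1) rfl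
    exact ⟨⟨f, hf⟩, rfl⟩) (by
    intro x
    cases n with
    | zero =>
      constructor
      · intro h
        have := aux_extMk_eq_zero_zero P _ _ rfl (hZ x) h
        exact ⟨0, by rw [map_zero]; exact this.symm⟩
      · rintro ⟨y, hy⟩
        have hf : S.f = 0 := (P.complex.linearYonedaObj A X).shape _ _ (fun h => Nat.succ_ne_zero _ h)
        have : x = 0 := Subtype.ext (by rw [← hy, hf]; rfl)
        rw [this, map_zero]
    | succ p =>
      have hp : (ComplexShape.up ℕ).prev (p+1) = p := by simp
      have := P.extMk_eq_zero_iff (show P.complex.X (p+1) ⟶ X from x.1) (p+1+1) rfl (hZ x) 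
        ((ComplexShape.up ℕ).prev (p+1)) (by rw [hp])
      exact this)
  exact ⟨e1.trans (e2.trans e3)⟩

end partE


section partB
open TensorProduct

variable {A : Type u} [CommRing A] {E : Type u} [AddCommGroup E] [Module A E]

theorem aux_inj_exact (hE : Module.Injective A E) {U V W : Type u}
    [AddCommGroup U] [AddCommGroup V] [AddCommGroup W] [Module A U] [Module A V] [Module A W]
    (f : U →ₗ[A] V) (g : V →ₗ[A] W) (hfg : ∀ v, g v = 0 → ∃ x, f x = v)
    (φ : V →ₗ[A] E) (hφ : φ ∘ₗ f = 0) : ∃ ψ : W →ₗ[A] E, ψ ∘ₗ g = φ := by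
  have hk : LinearMap.ker g ≤ LinearMap.ker φ := by
    intro v hv
    obtain ⟨x, rfl⟩ := hfg v hv
    exact LinearMap.congr_fun hφ x
  obtain ⟨h, hh⟩ := hE.out ((LinearMap.ker g).liftQ g le_rfl)
    (LinearMap.ker_eq_bot.1 (Submodule.ker_liftQ_eq_bot _ _ _ le_rfl))
    ((LinearMap.ker g).liftQ φ hk)
  refine ⟨h, LinearMap.ext fun v => ?_⟩
  simpa using hh (Submodule.Quotient.mk v)

/-- the evaluation map -/
noncomputable def auxEval (A : Type u) [CommRing A] (E : Type u) [AddCommGroup E] [Module A E]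
    (X K : Type u) [AddCommGroup X] [Module A X] [AddCommGroup K] [Module A K] :
    K ⊗[A] (X →ₗ[A] E) →ₗ[A] ((K →ₗ[A] X) →ₗ[A] E) :=
  TensorProduct.lift
    { toFun := fun k => 
        { toFun := fun φ => φ ∘ₗ LinearMap.applyₗ k
          map_add' := fun _ _ => rfl
          map_smul' := fun _ _ => rfl }
      map_add' := fun a b => by ext; simp
      map_smul' := fun a b => by ext; simp }

variable {X : Type u} [AddCommGroup X] [Module A X]

@[simp] theorem auxEval_tmul {K : Type u} [AddCommGroup K] [Module A K] (k : K) (φ : X →ₗ[A] E)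
    (f : K →ₗ[A] X) : auxEval A E X K (k ⊗ₜ φ) f = φ (f k) := rfl

theorem auxEval_nat {K K' : Type u} [AddCommGroup K] [Module A K] [AddCommGroup K'] [Module A K']
    (g : K →ₗ[A] K') (t : K ⊗[A] (X →ₗ[A] E)) :
    auxEval A E X K' (g.rTensor _ t) = auxEval A E X K t ∘ₗ LinearMap.lcomp A X g := by
  induction t with
  | zero => simp
  | add x y hx hy => rw [map_add, map_add, hx, hy, map_add]; rfl
  | tmul k φ => ext f; simp

theorem auxEval_free (K : Type u) [AddCommGroup K] [Module A K] [Module.Free A K]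
    [Module.Finite A K] : Function.Bijective (auxEval A E X K) := by
  let b := Module.Free.chooseBasis A K
  let inv : ((K →ₗ[A] X) →ₗ[A] E) →ₗ[A] K ⊗[A] (X →ₗ[A] E) :=
    ∑ i, (TensorProduct.mk A K (X →ₗ[A] E) (b i)) ∘ₗ
      LinearMap.lcomp A E (LinearMap.smulRightₗ (b.coord i) : X →ₗ[A] (K →ₗ[A] X))
  have hinv : ∀ ψ, inv ψ = ∑ i, b i ⊗ₜ (ψ ∘ₗ LinearMap.smulRightₗ (b.coord i)) := by
    intro ψ
    simp [inv, LinearMap.sum_apply, LinearMap.lcomp_apply']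
  have h1 : inv ∘ₗ auxEval A E X K = LinearMap.id := by
    ext k φ
    simp only [TensorProduct.AlgebraTensorModule.curry_apply, LinearMap.restrictScalars_self,
      TensorProduct.curry_apply, LinearMap.coe_comp, Function.comp_apply, LinearMap.id_coe, id_eq]
    rw [hinv]
    have : ∀ i, (auxEval A E X K (k ⊗ₜ[A] φ) ∘ₗ LinearMap.smulRightₗ (b.coord i)) = b.repr k i • φ := by
      intro i; ext x; simp
    simp_rw [this, TensorProduct.tmul_smul, TensorProduct.smul_tmul', ← TensorProduct.sum_tmul]
    rw [b.sum_repr]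
  have h2 : auxEval A E X K ∘ₗ inv = LinearMap.id := by
    ext ψ f
    simp only [LinearMap.coe_comp, Function.comp_apply, LinearMap.id_coe, id_eq]
    rw [hinv, map_sum, LinearMap.sum_apply]
    simp only [auxEval_tmul, LinearMap.coe_comp, Function.comp_apply]
    rw [← map_sum]
    congr 1
    apply b.ext
    intro j
    classical
    simp [LinearMap.sum_apply, Finsupp.single_apply]
  exact ⟨Function.LeftInverse.injective (LinearMap.congr_fun h1),
    Function.RightInverse.surjective (LinearMap.congr_fun h2)⟩

theorem auxEval_surj (hE : Module.Injective A E) (K : Type u) [AddCommGroup K] [Module A K]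
    [Module.Finite A K] : Function.Surjective (auxEval A E X K) := by
  obtain ⟨Q, _, _, _, _, f, hf⟩ := Module.exists_finite_presentation A K
  intro ψ
  obtain ⟨χ, hχ⟩ := hE.out (LinearMap.lcomp A X f) (fun a b h => by
    ext k
    obtain ⟨q, rfl⟩ := hf k
    exact LinearMap.congr_fun h q) ψ
  obtain ⟨t, rfl⟩ := (auxEval_free (X := X) (E := E) Q).2 χ
  refine ⟨f.rTensor _ t, ?_⟩
  rw [auxEval_nat]
  exact LinearMap.ext hχ

theorem auxEval_bij [IsNoetherianRing A] (hE : Module.Injective A E) (K : Type u)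
    [AddCommGroup K] [Module A K]
    [Module.Finite A K] : Function.Bijective (auxEval A E X K) := by
  refine ⟨?_, auxEval_surj hE K⟩
  obtain ⟨Q, _, _, _, _, f, hf⟩ := Module.exists_finite_presentation A K
  rw [injective_iff_map_eq_zero]
  intro t ht
  obtain ⟨s, rfl⟩ := LinearMap.rTensor_surjective _ hf t
  rw [auxEval_nat] at ht
  obtain ⟨ψ, hψ⟩ := aux_inj_exact hE (LinearMap.lcomp A X f)
    (LinearMap.lcomp A X (LinearMap.ker f).subtype) (fun v hv => by
      refine ⟨((LinearMap.ker f).liftQ v (fun x hx => LinearMap.congr_fun hv ⟨x, hx⟩)) ∘ₗ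
        (f.quotKerEquivOfSurjective hf).symm.toLinearMap, ?_⟩
      ext q
      have : (f.quotKerEquivOfSurjective hf).symm (f q) = Submodule.Quotient.mk q := by
        rw [LinearEquiv.symm_apply_eq]; rfl
      simp only [LinearMap.lcomp_apply, LinearMap.coe_comp, Function.comp_apply,
        LinearEquiv.coe_coe, this]
      rfl) _ ht
  obtain ⟨r, rfl⟩ := auxEval_surj hE _ ψ
  rw [← auxEval_nat] at hψ
  rw [← (auxEval_free (X := X) (E := E) Q).1 hψ, ← LinearMap.comp_apply, ← LinearMap.rTensor_comp]
  have : f ∘ₗ (LinearMap.ker f).subtype = 0 := by ext x; exact x.2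
  rw [this]; simp

end partB


section partC
open Limits MonoidalCategory

variable {A : Type u} [CommRing A]

noncomputable abbrev auxG (P : ChainComplex (ModuleCat.{u} A) ℕ) (K : ModuleCat.{u} A) :
    ChainComplex (ModuleCat.{u} A) ℕ :=
  (((tensoringLeft (ModuleCat.{u} A)).obj K).mapHomologicalComplex (ComplexShape.down ℕ)).obj P

noncomputable abbrev auxGmap (P : ChainComplex (ModuleCat.{u} A) ℕ) {K L : ModuleCat.{u} A}
    (f : K ⟶ L) : auxG P K ⟶ auxG P L :=
  (NatTrans.mapHomologicalComplex ((tensoringLeft (ModuleCat.{u} A)).map f)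
    (ComplexShape.down ℕ)).app P

noncomputable abbrev auxGS (P : ChainComplex (ModuleCat.{u} A) ℕ) 
    (S : ShortComplex (ModuleCat.{u} A)) : ShortComplex (ChainComplex (ModuleCat.{u} A) ℕ) :=
  ShortComplex.mk (auxGmap P S.f) (auxGmap P S.g) (by
    apply HomologicalComplex.hom_ext
    intro i
    have h : (S.f ▷ P.X i) ≫ (S.g ▷ P.X i) = 0 := by
      rw [← comp_whiskerRight, S.zero, MonoidalPreadditive.zero_whiskerRight]
    exact h)

theorem auxGS_shortExact (P : ChainComplex (ModuleCat.{u} A) ℕ) 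
    (hP : ∀ j, Module.Flat A (P.X j)) (S : ShortComplex (ModuleCat.{u} A)) (hS : S.ShortExact) :
    (auxGS P S).ShortExact := by
  apply HomologicalComplex.shortExact_of_degreewise_shortExact
  intro j
  have := hP j
  exact hS.map_of_exact (tensorRight (P.X j))

theorem auxG_isZero (P : ChainComplex (ModuleCat.{u} A) ℕ) (Q : ModuleCat.{u} A)
    [Module.Flat A Q] (i : ℕ) (hi : P.ExactAt i) : IsZero ((auxG P Q).homology i) := by
  rw [← HomologicalComplex.exactAt_iff_isZero_homology]
  have h := (HomologicalComplex.exactAt_iff _ _).1 hi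
  exact h.map (tensorLeft Q)

theorem auxT_shift (P : ChainComplex (ModuleCat.{u} A) ℕ) 
    (hP : ∀ j, Module.Flat A (P.X j)) (S : ShortComplex (ModuleCat.{u} A)) (hS : S.ShortExact)
    (hQ : Module.Flat A S.X₂) (i : ℕ) (hi : P.ExactAt (i+1)) :
    Nonempty ((auxG P S.X₃).homology (i+1) ≃ₗ[A]
      LinearMap.ker (HomologicalComplex.homologyMap (auxGmap P S.f) i).hom) := by
  have hG := auxGS_shortExact P hP S hS
  have hz := auxG_isZero P S.X₂ (i+1) hi
  have rel : (ComplexShape.down ℕ).Rel (i+1) i := rfl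
  let δ := hG.δ (i+1) i rel
  have h3 := (ShortComplex.moduleCat_exact_iff _).1 (hG.homology_exact₃ (i+1) i rel)
  have h1 := (ShortComplex.moduleCat_exact_iff _).1 (hG.homology_exact₁ (i+1) i rel)
  have hc := hG.δ_comp (i+1) i rel
  have : Subsingleton ((auxG P S.X₂).homology (i+1)) := ModuleCat.subsingleton_of_isZero hz
  refine ⟨LinearEquiv.ofBijective (LinearMap.codRestrict _ δ.hom (fun x => ?_)) ⟨?_, ?_⟩⟩
  · exact LinearMap.congr_fun (congrArg ModuleCat.Hom.hom hc) x
  · rw [injective_iff_map_eq_zero]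
    intro x hx
    obtain ⟨y, hy⟩ := h3 x (congrArg Subtype.val hx)
    rw [← hy, (Subsingleton.elim (α := (auxG P S.X₂).homology (i+1)) y 0)]
    exact map_zero _
  · rintro ⟨y, hy⟩
    obtain ⟨x, hx⟩ := h1 y hy
    exact ⟨x, Subtype.ext hx⟩

theorem auxT_shift' (P : ChainComplex (ModuleCat.{u} A) ℕ) 
    (hP : ∀ j, Module.Flat A (P.X j)) (S : ShortComplex (ModuleCat.{u} A)) (hS : S.ShortExact)
    (hQ : Module.Flat A S.X₂) (i : ℕ) (hi : P.ExactAt (i+1)) (hi' : P.ExactAt (i+1+1)) :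
    Nonempty ((auxG P S.X₃).homology (i+1+1) ≃ₗ[A] (auxG P S.X₁).homology (i+1)) := by
  obtain ⟨e⟩ := auxT_shift P hP S hS hQ (i+1) hi'
  have hz := auxG_isZero P S.X₂ (i+1) hi
  have : Subsingleton ((auxG P S.X₂).homology (i+1)) := ModuleCat.subsingleton_of_isZero hz
  refine ⟨e.trans (LinearEquiv.ofTop _ ?_)⟩
  rw [eq_top_iff]
  intro x _
  exact Subsingleton.elim (α := (auxG P S.X₂).homology (i+1)) _ _

/-- degree zero -/
noncomputable def auxT0 {N : ModuleCat.{u} A} (P : ProjectiveResolution N) (K : ModuleCat.{u} A) :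
    (auxG P.complex K).homology 0 ≅ K ⊗ N :=
  haveI : IsIso (P.fromLeftDerivedZero' ((tensoringLeft (ModuleCat.{u} A)).obj K)) := by
    have : PreservesFiniteColimits ((tensoringLeft (ModuleCat.{u} A)).obj K) :=
      inferInstanceAs (PreservesFiniteColimits (tensorLeft K))
    infer_instance
  (ChainComplex.isoHomologyι₀ (auxG P.complex K)) ≪≫
    asIso (P.fromLeftDerivedZero' ((tensoringLeft (ModuleCat.{u} A)).obj K))

theorem auxT0_nat {N : ModuleCat.{u} A} (P : ProjectiveResolution N) {K L : ModuleCat.{u} A} 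
    (f : K ⟶ L) : (auxT0 P K).hom ≫ (f ▷ N) =
      HomologicalComplex.homologyMap (auxGmap P.complex f) 0 ≫ (auxT0 P L).hom := by
  have h : P.fromLeftDerivedZero' ((tensoringLeft (ModuleCat.{u} A)).obj K) ≫ (f ▷ N) =
     HomologicalComplex.opcyclesMap (auxGmap P.complex f) 0 ≫
      P.fromLeftDerivedZero' ((tensoringLeft (ModuleCat.{u} A)).obj L) := by
    rw [← cancel_epi (HomologicalComplex.pOpcycles _ _),
      ProjectiveResolution.pOpcycles_comp_fromLeftDerivedZero'_assoc,
      HomologicalComplex.p_opcyclesMap_assoc, 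
      ProjectiveResolution.pOpcycles_comp_fromLeftDerivedZero']
    exact whisker_exchange _ _
  have h2 := HomologicalComplex.homologyι_naturality (auxGmap P.complex f) 0
  change (HomologicalComplex.homologyι _ _ ≫ _) ≫ _ = _ ≫ (HomologicalComplex.homologyι _ _ ≫ _)
  rw [Category.assoc]
  erw [h]
  rw [← Category.assoc, ← Category.assoc, ← h2]
  rfl

theorem auxT1 {N : ModuleCat.{u} A} (P : ProjectiveResolution N)
    (S : ShortComplex (ModuleCat.{u} A)) (hS : S.ShortExact)
    (hQ : Module.Flat A S.X₂) (hP : ∀ j, Module.Flat A (P.complex.X j)) :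
    Nonempty ((auxG P.complex S.X₃).homology 1 ≃ₗ[A]
      LinearMap.ker (LinearMap.rTensor N S.f.hom)) := by
  obtain ⟨e⟩ := auxT_shift P.complex hP S hS hQ 0 (P.complex_exactAt_succ 0)
  refine ⟨e.trans (LinearEquiv.ofSubmodules (auxT0 P S.X₁).toLinearEquiv _ _ ?_)⟩
  have hn := auxT0_nat P S.f
  ext x
  obtain ⟨y, rfl⟩ := (auxT0 P S.X₁).toLinearEquiv.surjective x
  have h := LinearMap.congr_fun (congrArg ModuleCat.Hom.hom hn) y
  rw [Submodule.mem_map_equiv, LinearEquiv.symm_apply_apply, LinearMap.mem_ker, LinearMap.mem_ker]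
  change (LinearMap.rTensor N S.f.hom) ((auxT0 P S.X₁).toLinearEquiv y) = 
    (auxT0 P S.X₂).toLinearEquiv ((HomologicalComplex.homologyMap (auxGmap P.complex S.f) 0).hom y) at h
  rw [h]
  exact (LinearEquiv.map_eq_zero_iff _).symm

theorem auxTor {N : ModuleCat.{u} A} (P : ProjectiveResolution N) (K : ModuleCat.{u} A) (i : ℕ) :
    Nonempty ((((Tor (ModuleCat.{u} A) i).obj K).obj N) ≃ₗ[A] (auxG P.complex K).homology i) :=
  ⟨(P.isoLeftDerivedObj ((tensoringLeft (ModuleCat.{u} A)).obj K) i).toLinearEquiv⟩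

end partC


section partD
open Limits MonoidalCategory Abelian

variable {A : Type u} [CommRing A]

theorem auxDcoker {E U V W : Type u} [AddCommGroup E] [Module A E] 
    [AddCommGroup U] [AddCommGroup V] [AddCommGroup W] [Module A U] [Module A V] [Module A W]
    (r : U →ₗ[A] V) (p : V →ₗ[A] W) (hp : Function.Surjective p)
    (h : ∀ v, p v = 0 ↔ ∃ x, r x = v) :
    Nonempty ((W →ₗ[A] E) ≃ₗ[A] LinearMap.ker (LinearMap.lcomp A E r)) := by
  refine ⟨LinearEquiv.ofBijective (LinearMap.codRestrict _ (LinearMap.lcomp A E p) ?_) ⟨?_, ?_⟩⟩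
  · intro φ
    ext x
    have : p (r x) = 0 := (h _).2 ⟨x, rfl⟩
    simp [this]
  · intro a b hab
    ext w
    obtain ⟨v, rfl⟩ := hp w
    exact LinearMap.congr_fun (congrArg Subtype.val hab) v
  · rintro ⟨φ, hφ⟩
    have hk : LinearMap.ker p ≤ LinearMap.ker φ := by
      intro v hv
      obtain ⟨x, rfl⟩ := (h v).1 hv
      exact LinearMap.congr_fun hφ x
    refine ⟨((LinearMap.ker p).liftQ φ hk) ∘ₗ (p.quotKerEquivOfSurjective hp).symm.toLinearMap,
      Subtype.ext (LinearMap.ext fun v => ?_)⟩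
    have : (p.quotKerEquivOfSurjective hp).symm (p v) = Submodule.Quotient.mk v := by
      rw [LinearEquiv.symm_apply_eq]; rfl
    change ((LinearMap.ker p).liftQ φ hk) ((p.quotKerEquivOfSurjective hp).symm (p v)) = φ v
    rw [this]; rfl

theorem aux_core [IsNoetherianRing A] {E : Type u} [AddCommGroup E] [Module A E]
    (hE : Module.Injective A E) (X : ModuleCat.{u} A)
    (P : ProjectiveResolution (ModuleCat.of A (X →ₗ[A] E))) (i : ℕ) (K : ModuleCat.{u} A)
    [Module.Finite A K] :
    Nonempty ((auxG P.complex K).homology i ≃ₗ[A] (Abelian.Ext.{u} K X i →ₗ[A] E)) := by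
  have hP : ∀ j, Module.Flat A (P.complex.X j) := fun j => by
    have : Module.Projective A (P.complex.X j) :=
      (IsProjective.iff_projective (P.complex.X j)).2 (P.projective j)
    infer_instance
  have hom0 : ∀ K : ModuleCat.{u} A, Abelian.Ext.{u} K X 0 ≃ₗ[A] (K →ₗ[A] X) := fun K =>
    Ext.linearEquiv₀.trans ModuleCat.homLinearEquiv
  induction i generalizing K with
  | zero =>
    exact ⟨(auxT0 P K).toLinearEquiv.trans ((LinearEquiv.ofBijective _
      (auxEval_bij (X := X) hE K)).trans 
        (LinearEquiv.congrLeft E A (Ext.linearEquiv₀.trans ModuleCat.homLinearEquiv).symm))⟩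
  | succ i ih =>
    obtain ⟨Q, _, _, _, _, f, surjf⟩ := Module.exists_finite_presentation A K
    have exac := LinearMap.shortExact_shortComplexKer surjf
    have hproj : Projective f.shortComplexKer.X₂ :=
      (IsProjective.iff_projective _).1 (inferInstanceAs (Module.Projective A Q))
    have hfree : Module.Free A f.shortComplexKer.X₂ := inferInstanceAs (Module.Free A Q)
    have hfin : Module.Finite A f.shortComplexKer.X₂ := inferInstanceAs (Module.Finite A Q)
    have hfin1 : Module.Finite A f.shortComplexKer.X₁ := 
      inferInstanceAs (Module.Finite A (LinearMap.ker f))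
    have hflat : Module.Flat A f.shortComplexKer.X₂ := inferInstanceAs (Module.Flat A Q)
    have hsurj := precomp_extClass_surjective_of_projective_X₂ X exac i
    cases i with
    | zero =>
      obtain ⟨e⟩ := auxT1 P _ exac hflat hP
      let S := f.shortComplexKer
      let c : (S.X₁ →ₗ[A] X) ≃ₗ[A] Abelian.Ext.{u} S.X₁ X 0 :=
        (Ext.linearEquiv₀.trans ModuleCat.homLinearEquiv).symm
      let p : (S.X₁ →ₗ[A] X) →ₗ[A] Abelian.Ext.{u} S.X₃ X 1 :=
        (exac.extClass.precompOfLinear A X (add_comm 1 0)) ∘ₗ c.toLinearMap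
      obtain ⟨e'⟩ := auxDcoker (E := E) (LinearMap.lcomp A X S.f.hom) p
        (hsurj.comp c.surjective) (fun v => by
          constructor
          · intro hv
            obtain ⟨x, hx⟩ := Ext.contravariant_sequence_exact₁ exac X _ (add_comm 1 0) hv
            obtain ⟨g, rfl⟩ := (Ext.linearEquiv₀ (R := A)).symm.surjective x
            refine ⟨g.hom, ?_⟩
            change (Ext.mk₀ S.f).comp (Ext.mk₀ g) _ = Ext.mk₀ (ModuleCat.ofHom v) at hx
            rw [Ext.mk₀_comp_mk₀] at hx
            have := (Ext.linearEquiv₀ (R := A)).symm.injective hx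
            exact congrArg ModuleCat.Hom.hom this
          · rintro ⟨x, rfl⟩
            change exac.extClass.comp (Ext.mk₀ (S.f ≫ ModuleCat.ofHom x)) (add_comm 1 0) = 0
            rw [← Ext.mk₀_comp_mk₀]
            exact exac.extClass_comp_assoc _)
      refine ⟨e.trans (LinearEquiv.trans (LinearEquiv.ofSubmodules
        (LinearEquiv.ofBijective _ (auxEval_bij (X := X) (E := E) hE S.X₁)) _ _ ?_) e'.symm)⟩
      ext x
      obtain ⟨y, rfl⟩ := (LinearEquiv.ofBijective _
        (auxEval_bij (X := X) (E := E) hE S.X₁)).surjective x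
      rw [Submodule.mem_map_equiv, LinearEquiv.symm_apply_apply, LinearMap.mem_ker,
        LinearMap.mem_ker]
      have h := auxEval_nat (X := X) (E := E) S.f.hom y
      constructor
      · intro hy
        change auxEval A E X S.X₁ y ∘ₗ LinearMap.lcomp A X S.f.hom = 0
        rw [← h]
        erw [hy]
        exact map_zero _
      · intro hy
        change auxEval A E X S.X₁ y ∘ₗ LinearMap.lcomp A X S.f.hom = 0 at hy
        rw [← h] at hy
        exact (auxEval_bij (X := X) (E := E) hE S.X₂).1 (hy.trans (map_zero _).symm)
    | succ i =>
      obtain ⟨e⟩ := auxT_shift' P.complex hP _ exac hflat i (P.complex_exactAt_succ _)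
        (P.complex_exactAt_succ _)
      obtain ⟨e2⟩ := ih f.shortComplexKer.X₁
      have hinj : Function.Injective (exac.extClass.precompOfLinear A X (add_comm 1 (i+1))) := by
        rw [injective_iff_map_eq_zero]
        intro x hx
        obtain ⟨y, rfl⟩ := Ext.contravariant_sequence_exact₁ exac X x (add_comm 1 (i+1)) hx
        rw [Ext.eq_zero_of_projective y, Ext.comp_zero]
      exact ⟨e.trans (e2.trans (LinearEquiv.congrLeft E A
        (LinearEquiv.ofBijective (exac.extClass.precompOfLinear A X (add_comm 1 (i+1)))
          ⟨hinj, hsurj⟩)))⟩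

theorem aux_main [IsNoetherianRing A] {E : Type u} [AddCommGroup E] [Module A E]
    (hE : Module.Injective A E) (X K : Type u) [AddCommGroup X] [Module A X] 
    [AddCommGroup K] [Module A K] [Module.Finite A K] (i : ℕ) :
    Nonempty ((((Tor (ModuleCat.{u} A) i).obj (ModuleCat.of A K)).obj
        (ModuleCat.of A (X →ₗ[A] E))) ≃ₗ[A]
      ((((Ext A (ModuleCat.{u} A) i).obj (Opposite.op (ModuleCat.of A K))).obj
        (ModuleCat.of A X)) →ₗ[A] E)) := by
  obtain ⟨e1⟩ := auxTor (projectiveResolution (ModuleCat.of A (X →ₗ[A] E))) (ModuleCat.of A K) i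
  have : Module.Finite A (ModuleCat.of A K) := inferInstanceAs (Module.Finite A K)
  obtain ⟨e2⟩ := aux_core hE (ModuleCat.of A X)
    (projectiveResolution (ModuleCat.of A (X →ₗ[A] E))) i (ModuleCat.of A K)
  obtain ⟨e3⟩ := aux_ext_equiv (ModuleCat.of A K) (ModuleCat.of A X) i
  exact ⟨e1.trans (e2.trans (LinearEquiv.congrLeft E A e3.symm))⟩

theorem aux_ext_annihilate (K X : ModuleCat.{u} A) (i : ℕ) (a : A) (ha : ∀ k : K, a • k = 0)
    (x : ((Ext A (ModuleCat.{u} A) i).obj (Opposite.op K)).obj X) : a • x = 0 := by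
  obtain ⟨e3⟩ := aux_ext_equiv K X i
  apply e3.injective
  rw [map_smul, map_zero]
  have h : a • 𝟙 K = 0 := by ext k; exact ha k
  rw [← Ext.mk₀_id_comp (e3 x), ← Ext.smul_comp, ← Ext.mk₀_smul, h, Ext.mk₀_zero, Ext.zero_comp]

end partD

section partF

theorem auxF_tower (R : Type u) [CommRing R] (A : Type u) [CommRing A] [Algebra R A]
    (B : Type u) [CommRing B] [Algebra R B] [Algebra A B] [IsScalarTower R A B]
    (X : Type u) [AddCommGroup X] [Module R X] [Module A X] [Module B X] [IsScalarTower R A X]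
    [IsScalarTower R B X] [IsScalarTower A B X]
    (E : Type u) [AddCommGroup E] [Module R E] : IsScalarTower A B (X →ₗ[R] E) := by
  refine ⟨fun a b f => LinearMap.ext fun x => ?_⟩
  change f ((a • b) • x) = f (b • a • x)
  rw [smul_assoc, ← algebraMap_smul B a x, ← algebraMap_smul B a (b • x), smul_smul, smul_smul,
    mul_comm]

theorem auxF_tower' (R : Type u) [CommRing R] (A : Type u) [CommRing A] [Algebra R A]
    (E : Type u) [AddCommGroup E] [Module R E] : IsScalarTower R A (A →ₗ[R] E) := by
  refine ⟨fun a b f => LinearMap.ext fun x => ?_⟩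
  change f ((a • b) • x) = a • f (b • x)
  rw [smul_assoc, map_smul]

noncomputable def auxCoext (R : Type u) [CommRing R] (A : Type u) [CommRing A] [Algebra R A]
    (X : Type u) [AddCommGroup X] [Module R X] [Module A X] [IsScalarTower R A X]
    (E : Type u) [AddCommGroup E] [Module R E] : 
    (X →ₗ[R] E) ≃ₗ[A] (X →ₗ[A] (A →ₗ[R] E)) where
  toFun h := 
    { toFun := fun x =>
        { toFun := fun a => h (a • x)
          map_add' := fun a b => by rw [add_smul, map_add]
          map_smul' := fun r a => by rw [smul_assoc, map_smul]; rfl }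
      map_add' := fun x y => LinearMap.ext fun a => by
        change h (a • (x + y)) = h (a • x) + h (a • y)
        rw [smul_add, map_add]
      map_smul' := fun b x => LinearMap.ext fun a => by
        change h (a • b • x) = h ((b * a) • x)
        rw [smul_smul, mul_comm] }
  map_add' f g := rfl
  map_smul' a f := LinearMap.ext fun x => LinearMap.ext fun b => by
    change f (a • b • x) = f ((a * b) • x)
    rw [smul_smul]
  invFun g := 
    { toFun := fun x => g x 1
      map_add' := fun x y => by rw [map_add]; rfl
      map_smul' := fun r x => by
        rw [← algebraMap_smul A r x, map_smul]
        change g x (algebraMap R A r * 1) = r • g x 1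
        rw [← Algebra.smul_def, map_smul] }
  left_inv h := LinearMap.ext fun x => by
    change h ((1 : A) • x) = h x
    rw [one_smul]
  right_inv g := LinearMap.ext fun x => LinearMap.ext fun a => by
    change g (a • x) 1 = g x a
    rw [map_smul]
    change g x (a * 1) = g x a
    rw [mul_one]

theorem auxF_inj (R : Type u) [CommRing R] (A : Type u) [CommRing A] [Algebra R A]
    (E : Type u) [AddCommGroup E] [Module R E] (hE : Module.Injective R E) :
    Module.Injective A (A →ₗ[R] E) := by
  constructor
  intro X Y _ _ _ _ f hf g
  letI : Module R X := Module.compHom X (algebraMap R A)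
  letI : Module R Y := Module.compHom Y (algebraMap R A)
  haveI : IsScalarTower R A X := IsScalarTower.of_compHom _ _ _
  haveI : IsScalarTower R A Y := IsScalarTower.of_compHom _ _ _
  obtain ⟨h, hh⟩ := hE.out (f.restrictScalars R) hf ((auxCoext R A X E).symm g)
  refine ⟨auxCoext R A Y E h, fun x => LinearMap.ext fun a => ?_⟩
  change h (a • f x) = g x a
  rw [← map_smul]
  refine (hh (a • x)).trans ?_
  change g (a • x) 1 = g x a
  rw [map_smul]
  change g x (a * 1) = g x a
  rw [mul_one]

noncomputable def auxFlip (R : Type u) [CommRing R] (A : Type u) [CommRing A] [Algebra R A]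
    (M E : Type u) [AddCommGroup M] [Module R M] [AddCommGroup E] [Module R E] 
    [SMulCommClass R A (A →ₗ[R] E)] :
    (A →ₗ[R] (M →ₗ[R] E)) ≃ₗ[A] (M →ₗ[R] (A →ₗ[R] E)) where
  toFun f := f.flip
  invFun f := f.flip
  left_inv f := rfl
  right_inv f := rfl
  map_add' f g := rfl
  map_smul' a f := rfl

theorem auxF_base (R : Type u) [CommRing R] (𝔭 : Ideal R) [𝔭.IsPrime]
    (M E : Type u) [AddCommGroup M] [Module R M] [AddCommGroup E] [Module R E] :
    Nonempty ((Localization.AtPrime 𝔭 →ₗ[R] (M →ₗ[R] E)) ≃ₗ[Localization.AtPrime 𝔭]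
      (LocalizedModule 𝔭.primeCompl M →ₗ[Localization.AtPrime 𝔭]
        (Localization.AtPrime 𝔭 →ₗ[R] E))) := by
  haveI := auxF_tower' R (Localization.AtPrime 𝔭) E
  have hb := IsLocalizedModule.isBaseChange 𝔭.primeCompl (Localization.AtPrime 𝔭)
    (LocalizedModule.mkLinearMap 𝔭.primeCompl M)
  exact ⟨(auxFlip R (Localization.AtPrime 𝔭) M E).trans
    ((LinearMap.liftBaseChangeEquiv (Localization.AtPrime 𝔭)).trans
      (LinearEquiv.congrLeft _ (Localization.AtPrime 𝔭) hb.equiv))⟩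

theorem auxF_final (R : Type u) [CommRing R] (A : Type u) [CommRing A] [Algebra R A]
    (k : Type u) [Field k] [Algebra R k] [Algebra A k] [IsScalarTower R A k]
    (hs : Function.Surjective (algebraMap A k))
    (E : Type u) [AddCommGroup E] [Module R E]
    (W V : Type u) [AddCommGroup W] [Module A W] [Module k W] [IsScalarTower A k W]
    [AddCommGroup V] [Module A V] [Module k V] [IsScalarTower A k V]
    (e : V ≃ₗ[A] (W →ₗ[A] (A →ₗ[R] E))) :
    ∃ ι : Type u, Cardinal.mk ι = Module.rank k W ∧
      Nonempty (V ≃ₗ[k] (ι → (k →ₗ[R] E))) := by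
  let b := Module.Free.chooseBasis k W
  refine ⟨Module.Free.ChooseBasisIndex k W, b.mk_eq_rank'', ?_⟩
  haveI := auxF_tower R A k k E
  let e1 : (W →ₗ[A] (A →ₗ[R] E)) ≃ₗ[A]
      ((Module.Free.ChooseBasisIndex k W →₀ k) →ₗ[A] (A →ₗ[R] E)) :=
    LinearEquiv.congrLeft _ A (b.repr.restrictScalars A)
  let e2 : ((Module.Free.ChooseBasisIndex k W →₀ k) →ₗ[A] (A →ₗ[R] E)) ≃ₗ[A]
      (Module.Free.ChooseBasisIndex k W → (k →ₗ[A] (A →ₗ[R] E))) :=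
    (Finsupp.lsum A).symm
  let e3 : (Module.Free.ChooseBasisIndex k W → (k →ₗ[A] (A →ₗ[R] E))) ≃ₗ[A]
      (Module.Free.ChooseBasisIndex k W → (k →ₗ[R] E)) :=
    LinearEquiv.piCongrRight (fun _ => (auxCoext R A k E).symm)
  exact ⟨(e.trans (e1.trans (e2.trans e3))).extendScalarsOfSurjective hs⟩

theorem auxF_exists (A : Type u) [CommRing A] [IsLocalRing A] (T : Type u) [AddCommGroup T]
    [Module A T] (hT : ∀ a ∈ IsLocalRing.maximalIdeal A, ∀ t : T, a • t = 0) :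
    ∃ (W : Type u) (_ : AddCommGroup W) (_ : Module (IsLocalRing.ResidueField A) W),
      Nonempty ((RestrictScalars A (IsLocalRing.ResidueField A) W) ≃ₗ[A] T) := by
  have ht : Module.IsTorsionBySet A T (IsLocalRing.maximalIdeal A : Set A) :=
    fun t a => hT a.1 a.2 t
  letI m : Module (IsLocalRing.ResidueField A) T := ht.module
  refine ⟨T, inferInstance, m, ⟨{ AddEquiv.refl T with map_smul' := fun a t => rfl }⟩⟩

end partF

/-- For a prime `𝔭` of a commutative Noetherian ring, an injective
module `E` and a module `M`, for all `i ≥ 0` the `k(𝔭)`-vector space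
`Tor_i^{R_𝔭}(k(𝔭), Hom_R(R_𝔭, Hom_R(M, E)))` is isomorphic to a direct product of
copies of `Hom_R(k(𝔭), E)` indexed by a set of cardinality
`μ_i(𝔭, M) = dim_{k(𝔭)} Ext^i_{R_𝔭}(k(𝔭), M_𝔭)`; in particular its `k(𝔭)`-dimension
equals the `k(𝔭)`-dimension of this direct product. -/
theorem tor_dual_iso_prod_hom_pow_bass [IsNoetherianRing R]
    (𝔭 : Ideal R) [𝔭.IsPrime] (E : Type u) [AddCommGroup E] [Module R E]
    (hE : Module.Injective R E) (M : Type u) [AddCommGroup M] [Module R M] (i : ℕ) :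
    (∃ (W : Type u) (_ : AddCommGroup W)
        (_ : Module (IsLocalRing.ResidueField (Localization.AtPrime 𝔭)) W),
        Nonempty ((RestrictScalars (Localization.AtPrime 𝔭)
            (IsLocalRing.ResidueField (Localization.AtPrime 𝔭)) W) ≃ₗ[Localization.AtPrime 𝔭]
          (((Ext (Localization.AtPrime 𝔭) (ModuleCat.{u} (Localization.AtPrime 𝔭)) i).obj
            (Opposite.op (ModuleCat.of (Localization.AtPrime 𝔭)
              (IsLocalRing.ResidueField (Localization.AtPrime 𝔭))))).obj
            (ModuleCat.of (Localization.AtPrime 𝔭) (LocalizedModule 𝔭.primeCompl M))))) ∧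
    (∃ (V : Type u) (_ : AddCommGroup V)
        (_ : Module (IsLocalRing.ResidueField (Localization.AtPrime 𝔭)) V),
        Nonempty ((RestrictScalars (Localization.AtPrime 𝔭)
            (IsLocalRing.ResidueField (Localization.AtPrime 𝔭)) V) ≃ₗ[Localization.AtPrime 𝔭]
          (((Tor (ModuleCat.{u} (Localization.AtPrime 𝔭)) i).obj
            (ModuleCat.of (Localization.AtPrime 𝔭)
              (IsLocalRing.ResidueField (Localization.AtPrime 𝔭)))).obj
            (ModuleCat.of (Localization.AtPrime 𝔭)
              (Localization.AtPrime 𝔭 →ₗ[R] (M →ₗ[R] E)))))) ∧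
    (∀ (W : Type u) (_ : AddCommGroup W)
        (_ : Module (IsLocalRing.ResidueField (Localization.AtPrime 𝔭)) W),
      Nonempty ((RestrictScalars (Localization.AtPrime 𝔭)
            (IsLocalRing.ResidueField (Localization.AtPrime 𝔭)) W) ≃ₗ[Localization.AtPrime 𝔭]
          (((Ext (Localization.AtPrime 𝔭) (ModuleCat.{u} (Localization.AtPrime 𝔭)) i).obj
            (Opposite.op (ModuleCat.of (Localization.AtPrime 𝔭)
              (IsLocalRing.ResidueField (Localization.AtPrime 𝔭))))).obj
            (ModuleCat.of (Localization.AtPrime 𝔭) (LocalizedModule 𝔭.primeCompl M)))) →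
      ∀ (V : Type u) (_ : AddCommGroup V)
          (_ : Module (IsLocalRing.ResidueField (Localization.AtPrime 𝔭)) V),
        Nonempty ((RestrictScalars (Localization.AtPrime 𝔭)
              (IsLocalRing.ResidueField (Localization.AtPrime 𝔭)) V) ≃ₗ[Localization.AtPrime 𝔭]
            (((Tor (ModuleCat.{u} (Localization.AtPrime 𝔭)) i).obj
              (ModuleCat.of (Localization.AtPrime 𝔭)
                (IsLocalRing.ResidueField (Localization.AtPrime 𝔭)))).obj
              (ModuleCat.of (Localization.AtPrime 𝔭)
                (Localization.AtPrime 𝔭 →ₗ[R] (M →ₗ[R] E))))) →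
        ∃ ι : Type u,
          Cardinal.mk ι = Module.rank (IsLocalRing.ResidueField (Localization.AtPrime 𝔭)) W ∧
          Nonempty (V ≃ₗ[IsLocalRing.ResidueField (Localization.AtPrime 𝔭)]
            (ι → (IsLocalRing.ResidueField (Localization.AtPrime 𝔭) →ₗ[R] E))) ∧
          Module.rank (IsLocalRing.ResidueField (Localization.AtPrime 𝔭)) V =
            Module.rank (IsLocalRing.ResidueField (Localization.AtPrime 𝔭))
              (ι → (IsLocalRing.ResidueField (Localization.AtPrime 𝔭) →ₗ[R] E))) := by
  haveI : IsNoetherianRing (Localization.AtPrime 𝔭) :=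
    IsLocalization.isNoetherianRing 𝔭.primeCompl _ inferInstance
  have hs : Function.Surjective (algebraMap (Localization.AtPrime 𝔭)
      (IsLocalRing.ResidueField (Localization.AtPrime 𝔭))) := IsLocalRing.residue_surjective
  haveI : Module.Finite (Localization.AtPrime 𝔭)
      (IsLocalRing.ResidueField (Localization.AtPrime 𝔭)) :=
    Module.Finite.of_surjective (Algebra.linearMap _ _) hs
  have hk : ∀ a ∈ IsLocalRing.maximalIdeal (Localization.AtPrime 𝔭),
      ∀ x : IsLocalRing.ResidueField (Localization.AtPrime 𝔭), a • x = 0 := by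
    intro a ha x
    rw [Algebra.smul_def]
    have : algebraMap (Localization.AtPrime 𝔭)
      (IsLocalRing.ResidueField (Localization.AtPrime 𝔭)) a = 0 :=
      (IsLocalRing.residue_eq_zero_iff a).2 ha
    rw [this, zero_mul]
  have hinj := auxF_inj R (Localization.AtPrime 𝔭) E hE
  obtain ⟨eb⟩ := auxF_base R 𝔭 M E
  obtain ⟨em⟩ := aux_main hinj (LocalizedModule 𝔭.primeCompl M)
    (IsLocalRing.ResidueField (Localization.AtPrime 𝔭)) i
  have eT := ((((Tor (ModuleCat.{u} (Localization.AtPrime 𝔭)) i).obj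
            (ModuleCat.of (Localization.AtPrime 𝔭)
              (IsLocalRing.ResidueField (Localization.AtPrime 𝔭)))).mapIso
              eb.toModuleIso).toLinearEquiv).trans em
  have hX := fun a ha x => aux_ext_annihilate (ModuleCat.of (Localization.AtPrime 𝔭)
      (IsLocalRing.ResidueField (Localization.AtPrime 𝔭)))
      (ModuleCat.of (Localization.AtPrime 𝔭) (LocalizedModule 𝔭.primeCompl M)) i a (hk a ha) x
  refine ⟨auxF_exists _ _ hX, auxF_exists _ _ ?_, ?_⟩
  · intro a ha t
    apply eT.injective
    rw [map_smul, map_zero]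
    refine LinearMap.ext fun x => ?_
    rw [LinearMap.smul_apply, ← map_smul, hX a ha x, map_zero, LinearMap.zero_apply]
  · intro W iW mW hW V iV mV hV
    obtain ⟨eW⟩ := hW
    obtain ⟨eV⟩ := hV
    letI aW : Module (Localization.AtPrime 𝔭) W := Module.compHom W (algebraMap
      (Localization.AtPrime 𝔭) (IsLocalRing.ResidueField (Localization.AtPrime 𝔭)))
    letI aV : Module (Localization.AtPrime 𝔭) V := Module.compHom V (algebraMap
      (Localization.AtPrime 𝔭) (IsLocalRing.ResidueField (Localization.AtPrime 𝔭)))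
    haveI : IsScalarTower (Localization.AtPrime 𝔭)
      (IsLocalRing.ResidueField (Localization.AtPrime 𝔭)) W := IsScalarTower.of_compHom _ _ _
    haveI : IsScalarTower (Localization.AtPrime 𝔭)
      (IsLocalRing.ResidueField (Localization.AtPrime 𝔭)) V := IsScalarTower.of_compHom _ _ _
    have eW' : W ≃ₗ[Localization.AtPrime 𝔭] _ := eW
    have eV' : V ≃ₗ[Localization.AtPrime 𝔭] _ := eV
    obtain ⟨ι, h1, ⟨h2⟩⟩ := auxF_final R (Localization.AtPrime 𝔭)
      (IsLocalRing.ResidueField (Localization.AtPrime 𝔭)) hs E W V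
      (eV'.trans (eT.trans (LinearEquiv.congrLeft _ (Localization.AtPrime 𝔭) eW'.symm)))
    have h3 : V ≃ₗ[IsLocalRing.ResidueField (Localization.AtPrime 𝔭)]
            (ι → (IsLocalRing.ResidueField (Localization.AtPrime 𝔭) →ₗ[R] E)) := h2
    exact ⟨ι, h1, ⟨h3⟩, h3.rank_eq⟩
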